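/- arXiv:1506.00179 — 5 statements merged into one kernel-verified Lean document; each statement's English description precedes it below -/
import Mathlib

section
/- Let c ∈ (1,∞) and let φ̂_0 ∈ C^∞(ℝ) be bounded with φ̂_0(ω) = 1 for |ω| ≤ 1 and φ̂_0(ω) = 0 for |ω| ≥ c. Then there is a constant C, depending only on φ̂_0, such that for all λ > λ' > c, the inverse Fourier transform h of ĥ(ω) := ĥ_0(ω) φ̂_0(ω/π) satisfies ‖h‖_{L¹} = ∫_{−∞}^{∞} |h(t)| dt ≤ C λ'. -/
noncomputable section
open MeasureTheory
open scoped Real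

/-- Inverse Fourier transform `(1/√(2π)) ∫ F(ω) e^{iωt} dω`. -/
def invFT (F : ℝ → ℂ) (t : ℝ) : ℂ :=
  (1 / Real.sqrt (2 * π) : ℝ) * ∫ ω : ℝ, F ω * Complex.exp (Complex.I * ω * t)

/-- `ĥ₀(ω) = λ sin(ω/(2λ)) / (λ' sin(ω/(2λ')))`, with `ĥ₀(0) = 1`. -/
def hhat0 (lam lam' ω : ℝ) : ℝ :=
  if ω = 0 then 1
  else (lam * Real.sin (ω / (2 * lam))) / (lam' * Real.sin (ω / (2 * lam')))

lemma aux_ibp (f : ℝ → ℝ) (hf : ContDiff ℝ 1 f) (hs : HasCompactSupport f) (t : ℝ) :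
    ∫ ω : ℝ, ((deriv f ω : ℝ) : ℂ) * Complex.exp (Complex.I * ω * t)
      = -(Complex.I * t * ∫ ω : ℝ, (f ω : ℂ) * Complex.exp (Complex.I * ω * t)) := by
  have hf' : Continuous (deriv f) := hf.continuous_deriv le_rfl
  have hs' : HasCompactSupport (deriv f) := hs.deriv
  have hc : ∀ g : ℝ → ℝ, HasCompactSupport g → HasCompactSupport (fun x => (g x : ℂ)) := by
    intro g hg
    exact hg.comp_left (g := fun x : ℝ => (x : ℂ)) (by simp)
  have hfc := hf.continuous
  have key := integral_mul_deriv_eq_deriv_mul_of_integrable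
    (u := fun ω : ℝ => Complex.exp (Complex.I * ω * t))
    (u' := fun ω : ℝ => Complex.exp (Complex.I * ω * t) * (Complex.I * t))
    (v := fun ω : ℝ => (f ω : ℂ)) (v' := fun ω : ℝ => ((deriv f ω : ℝ) : ℂ))
    (by
      intro x _
      have h1 : HasDerivAt (fun ω : ℝ => (ω : ℂ)) 1 x := by
        simpa using (hasDerivAt_id x).ofReal_comp
      have h2 := ((h1.const_mul Complex.I).mul_const (t : ℂ)).cexp
      simpa using h2)
    (by
      intro x _
      exact ((hf.differentiable (by norm_num)) x).hasDerivAt.ofReal_comp)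
    (by
      apply Continuous.integrable_of_hasCompactSupport
      · exact Continuous.mul (by fun_prop) (by fun_prop)
      · exact (hc _ hs').mul_left)
    (by
      apply Continuous.integrable_of_hasCompactSupport
      · exact Continuous.mul (by fun_prop) (by fun_prop)
      · exact (hc _ hs).mul_left)
    (by
      apply Continuous.integrable_of_hasCompactSupport
      · exact Continuous.mul (by fun_prop) (by fun_prop)
      · exact (hc _ hs).mul_left)
  rw [← integral_const_mul, ← integral_neg]
  rw [← integral_neg] at key
  calc _ = _ := by congr 1; ext ω; exact mul_comm _ _
    _ = _ := key
    _ = _ := by congr 1; ext ω; ring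

def Bd2 (M : ℝ) (f : ℝ → ℝ) : Prop :=
  ContDiff ℝ (⊤ : ℕ∞) f ∧
    ∀ x, |f x| ≤ M ∧ |deriv f x| ≤ M ∧ |deriv (deriv f) x| ≤ M

lemma contDiff_deriv_top {f : ℝ → ℝ} (h : ContDiff ℝ (⊤ : ℕ∞) f) :
    ContDiff ℝ (⊤ : ℕ∞) (deriv f) :=
  (contDiff_infty_iff_deriv.1 h).2

lemma Bd2.of_compact {f : ℝ → ℝ} (h : ContDiff ℝ (⊤ : ℕ∞) f) (hs : HasCompactSupport f) :
    ∃ M, Bd2 M f := by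
  have h1 := contDiff_deriv_top h
  have h2 := contDiff_deriv_top h1
  obtain ⟨A, hA⟩ := hs.exists_bound_of_continuous h.continuous
  obtain ⟨B, hB⟩ := hs.deriv.exists_bound_of_continuous h1.continuous
  obtain ⟨C, hC⟩ := hs.deriv.deriv.exists_bound_of_continuous h2.continuous
  refine ⟨max A (max B C), h, fun x => ⟨(hA x).trans ?_, (hB x).trans ?_, (hC x).trans ?_⟩⟩ <;> simp

lemma Bd2.mul {f g : ℝ → ℝ} {M N : ℝ} (hf : Bd2 M f) (hg : Bd2 N g) :
    Bd2 (4 * (M * N)) (fun x => f x * g x) := by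
  have hM : 0 ≤ M := (abs_nonneg _).trans (hf.2 0).1
  have hN : 0 ≤ N := (abs_nonneg _).trans (hg.2 0).1
  have hfd : Differentiable ℝ f := hf.1.differentiable (by simp)
  have hgd : Differentiable ℝ g := hg.1.differentiable (by simp)
  have hfd' : Differentiable ℝ (deriv f) := (contDiff_deriv_top hf.1).differentiable (by simp)
  have hgd' : Differentiable ℝ (deriv g) := (contDiff_deriv_top hg.1).differentiable (by simp)
  have e1 : deriv (fun x => f x * g x) = fun x => deriv f x * g x + f x * deriv g x := by
    ext x
    exact ((hfd x).hasDerivAt.mul (hgd x).hasDerivAt).deriv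
  have e2 : ∀ x, deriv (deriv (fun x => f x * g x)) x =
      (deriv (deriv f) x * g x + deriv f x * deriv g x)
       + (deriv f x * deriv g x + f x * deriv (deriv g) x) := by
    intro x
    rw [e1]
    exact (((hfd' x).hasDerivAt.mul (hgd x).hasDerivAt).add
      ((hfd x).hasDerivAt.mul (hgd' x).hasDerivAt)).deriv
  have hb : ∀ a b : ℝ, |a| ≤ M → |b| ≤ N → |a * b| ≤ M * N := by
    intro a b ha hb
    rw [abs_mul]
    exact mul_le_mul ha hb (abs_nonneg _) hM
  have hMN : 0 ≤ M * N := mul_nonneg hM hN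
  refine ⟨hf.1.mul hg.1, fun x => ?_⟩
  obtain ⟨a0, a1, a2⟩ := hf.2 x
  obtain ⟨b0, b1, b2⟩ := hg.2 x
  refine ⟨(hb _ _ a0 b0).trans (by linarith), ?_, ?_⟩
  · rw [e1]
    refine (abs_add_le _ _).trans ?_
    linarith [hb _ _ a1 b0, hb _ _ a0 b1]
  · rw [e2]
    refine (abs_add_le _ _).trans ?_
    have i1 := abs_add_le (deriv (deriv f) x * g x) (deriv f x * deriv g x)
    have i2 := abs_add_le (deriv f x * deriv g x) (f x * deriv (deriv g) x)
    linarith [hb _ _ a2 b0, hb _ _ a1 b1, hb _ _ a0 b2]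

lemma Bd2.scale {f : ℝ → ℝ} {M a : ℝ} (hf : Bd2 M f) (ha : |a| ≤ 1) :
    Bd2 M (fun x => f (a * x)) := by
  have hM : 0 ≤ M := (abs_nonneg _).trans (hf.2 0).1
  have e1 : deriv (fun x => f (a * x)) = fun x => a * deriv f (a * x) := by
    ext x
    simpa using deriv_comp_mul_left a f x
  have e2 : ∀ x, deriv (deriv (fun x => f (a * x))) x = a * (a * deriv (deriv f) (a * x)) := by
    intro x
    rw [e1]
    have hd : Differentiable ℝ (deriv f) := (contDiff_deriv_top hf.1).differentiable (by simp)
    have hd' : DifferentiableAt ℝ (fun x => deriv f (a * x)) x := by fun_prop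
    rw [deriv_const_mul _ hd']
    congr 1
    simpa using deriv_comp_mul_left a (deriv f) x
  have hb : ∀ b : ℝ, |b| ≤ M → |a * b| ≤ M := by
    intro b hb
    rw [abs_mul]
    calc |a| * |b| ≤ 1 * M := mul_le_mul ha hb (abs_nonneg _) zero_le_one
      _ = M := one_mul M
  refine ⟨hf.1.comp (contDiff_const.mul contDiff_id), fun x => ?_⟩
  obtain ⟨a0, a1, a2⟩ := hf.2 (a * x)
  refine ⟨a0, ?_, ?_⟩
  · rw [e1]; exact hb _ a1
  · rw [e2]; exact hb _ (hb _ a2)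

lemma aux_L1 (f : ℝ → ℝ) (M R : ℝ) (hR : 0 ≤ R) (hf : Bd2 M f)
    (h0 : ∀ x, R ≤ |x| → f x = 0) :
    ∫ t : ℝ, ‖invFT (fun ω => (f ω : ℂ)) t‖ ≤ (4 * R * M) * π := by
  have hM : 0 ≤ M := (abs_nonneg _).trans (hf.2 0).1
  have hts : tsupport f ⊆ Set.Icc (-R) R := by
    refine closure_minimal ?_ isClosed_Icc
    intro x hx
    by_contra h
    apply hx
    apply h0
    by_contra h'
    push Not at h'
    exact h ⟨(abs_lt.1 h').1.le, (abs_lt.1 h').2.le⟩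
  have hs : HasCompactSupport f := isCompact_Icc.of_isClosed_subset (isClosed_tsupport f) hts
  have h1 := contDiff_deriv_top hf.1
  have hts1 : tsupport (deriv f) ⊆ Set.Icc (-R) R := (tsupport_deriv_subset).trans hts
  have hts2 : tsupport (deriv (deriv f)) ⊆ Set.Icc (-R) R := (tsupport_deriv_subset).trans hts1
  have bd : ∀ g : ℝ → ℝ, tsupport g ⊆ Set.Icc (-R) R → (∀ x, |g x| ≤ M) → ∀ t : ℝ,
      ‖∫ ω : ℝ, (g ω : ℂ) * Complex.exp (Complex.I * ω * t)‖ ≤ M * (2 * R) := by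
    intro g hg hgM t
    rw [← setIntegral_eq_integral_of_forall_compl_eq_zero (s := Set.Icc (-R) R)]
    · have := norm_setIntegral_le_of_norm_le_const (μ := volume) (s := Set.Icc (-R) R)
        (f := fun ω : ℝ => (g ω : ℂ) * Complex.exp (Complex.I * ω * t)) (C := M)
        (by simp) (by
          intro x _
          have : Complex.I * x * t = ((x * t : ℝ) : ℂ) * Complex.I := by push_cast; ring
          rw [norm_mul, this, Complex.norm_exp_ofReal_mul_I, mul_one]
          simpa using hgM x)
      refine this.trans (le_of_eq ?_)
      rw [Real.volume_real_Icc_of_le (by linarith)]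
      ring
    · intro x hx
      have : g x = 0 := by
        by_contra h
        exact hx (hg (subset_tsupport g h))
      simp [this]
  have hpt : ∀ t : ℝ, ‖invFT (fun ω => (f ω : ℂ)) t‖ ≤ (4 * R * M) * (1 + t ^ 2)⁻¹ := by
    intro t
    have i0 := bd f hts (fun x => (hf.2 x).1) t
    have i2 := bd _ hts2 (fun x => (hf.2 x).2.2) t
    rw [aux_ibp (deriv f) (h1.of_le (by exact_mod_cast le_top)) hs.deriv t,
      aux_ibp f (hf.1.of_le (by exact_mod_cast le_top)) hs t] at i2
    unfold invFT
    set J := ∫ ω : ℝ, (f ω : ℂ) * Complex.exp (Complex.I * ω * t) with hJ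
    have hn : ‖-(Complex.I * t * -(Complex.I * t * J))‖ = t ^ 2 * ‖J‖ := by
      simp only [norm_neg, norm_mul, Complex.norm_I, Complex.norm_real, Real.norm_eq_abs]
      rw [← sq_abs t]; ring
    rw [hn] at i2
    have hsq : ‖((1 / Real.sqrt (2 * π) : ℝ) : ℂ)‖ ≤ 1 := by
      rw [Complex.norm_real, Real.norm_eq_abs, abs_of_nonneg (by positivity)]
      apply div_le_one_of_le₀ _ (by positivity)
      rw [Real.one_le_sqrt]
      linarith [Real.pi_gt_three]
    rw [norm_mul, ← div_eq_mul_inv, le_div_iff₀ (by positivity)]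
    have : ‖((1 / Real.sqrt (2 * π) : ℝ) : ℂ)‖ * ‖J‖ ≤ ‖J‖ :=
      mul_le_of_le_one_left (norm_nonneg _) hsq
    calc _ ≤ ‖J‖ * (1 + t ^ 2) := mul_le_mul_of_nonneg_right this (by positivity)
      _ ≤ _ := by nlinarith
  calc _ ≤ ∫ t : ℝ, (4 * R * M) * (1 + t ^ 2)⁻¹ := by
        apply integral_mono_of_nonneg
        · exact Filter.Eventually.of_forall fun t => norm_nonneg _
        · exact integrable_inv_one_add_sq.const_mul _
        · exact Filter.Eventually.of_forall hpt
    _ = _ := by rw [integral_const_mul, integral_univ_inv_one_add_sq]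

def sinc0 : ℝ → ℝ := dslope Real.sin 0

lemma sinc0_of_ne {x : ℝ} (hx : x ≠ 0) : sinc0 x = Real.sin x / x := by
  rw [sinc0, dslope_of_ne _ hx, slope_def_field]; simp

lemma sinc0_zero : sinc0 0 = 1 := by simp [sinc0]

lemma sinc0_contDiff : ContDiff ℝ (⊤ : ℕ∞) sinc0 := by
  rw [contDiff_iff_contDiffAt]
  intro x
  by_cases hx : x = 0
  · subst hx
    have h : AnalyticAt ℝ Real.sin 0 := Real.analyticAt_sin
    obtain ⟨p, hp⟩ := h
    exact (AnalyticAt.contDiffAt ⟨_, hp.has_fpower_series_dslope_fslope⟩)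
  · have : sinc0 =ᶠ[nhds x] fun y => Real.sin y / y := by
      filter_upwards [isOpen_ne.mem_nhds hx] with y hy
      exact sinc0_of_ne hy
    refine ContDiffAt.congr_of_eventuallyEq ?_ this
    exact Real.contDiff_sin.contDiffAt.div contDiffAt_id hx

lemma sinc0_pos {x : ℝ} (hx : |x| < π) : 0 < sinc0 x := by
  have h := abs_lt.1 hx
  rcases lt_trichotomy x 0 with h0 | h0 | h0
  · rw [sinc0_of_ne h0.ne]
    exact div_pos_of_neg_of_neg (Real.sin_neg_of_neg_of_neg_pi_lt h0 h.1) h0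
  · rw [h0, sinc0_zero]; exact one_pos
  · rw [sinc0_of_ne h0.ne']
    exact div_pos (Real.sin_pos_of_pos_of_lt_pi h0 h.2) h0

lemma exists_AB : ∃ A B : ℝ → ℝ, ∃ M : ℝ, Bd2 M A ∧ Bd2 M B ∧
    ∀ x, |x| ≤ 2 → A x = sinc0 x ∧ B x = (sinc0 x)⁻¹ := by
  let χ : ContDiffBump (0 : ℝ) := ⟨2, 3, by norm_num, by norm_num⟩
  have hχ : ContDiff ℝ (⊤ : ℕ∞) χ := χ.contDiff
  have hcs : HasCompactSupport χ := χ.hasCompactSupport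
  have h1 : ∀ x, |x| ≤ 2 → χ x = 1 := by
    intro x hx
    apply χ.one_of_mem_closedBall
    simpa using hx
  have hpos : ∀ x, 0 < sinc0 x ^ 2 + (1 - χ x) := by
    intro x
    by_cases hx : |x| < π
    · have := sinc0_pos hx
      have := χ.le_one (x := x)
      nlinarith
    · have : χ x = 0 := by
        apply χ.zero_of_le_dist
        push Not at hx
        have := Real.pi_gt_three
        show (3:ℝ) ≤ _
        simp
        linarith
      rw [this]; nlinarith [sq_nonneg (sinc0 x)]
  have hA : ContDiff ℝ (⊤ : ℕ∞) (fun x => χ x * sinc0 x) := hχ.mul sinc0_contDiff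
  have hB : ContDiff ℝ (⊤ : ℕ∞) (fun x => χ x * (sinc0 x / (sinc0 x ^ 2 + (1 - χ x)))) :=
    hχ.mul (sinc0_contDiff.div ((sinc0_contDiff.pow 2).add (contDiff_const.sub hχ))
      (fun x => (hpos x).ne'))
  obtain ⟨M, hM⟩ := Bd2.of_compact hA hcs.mul_right
  obtain ⟨N, hN⟩ := Bd2.of_compact hB hcs.mul_right
  refine ⟨_, _, max M N, ⟨hM.1, fun x => ?_⟩, ⟨hN.1, fun x => ?_⟩, ?_⟩
  · obtain ⟨a, b, c⟩ := hM.2 x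
    exact ⟨a.trans (le_max_left _ _), b.trans (le_max_left _ _), c.trans (le_max_left _ _)⟩
  · obtain ⟨a, b, c⟩ := hN.2 x
    exact ⟨a.trans (le_max_right _ _), b.trans (le_max_right _ _), c.trans (le_max_right _ _)⟩
  · intro x hx
    have hp := sinc0_pos (x := x) (by linarith [Real.pi_gt_three])
    simp only [h1 x hx]
    refine ⟨by ring, ?_⟩
    field_simp
    ring

/-- for a smooth bounded cutoff `φ̂₀` equal to `1` on `[-1,1]` and `0` off
`(-c, c)`, there is a constant `C = C(φ̂₀)` so that for all `λ > λ' > c` the inverse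
Fourier transform `h` of `ĥ(ω) = ĥ₀(ω) φ̂₀(ω/π)` satisfies `‖h‖_{L¹} ≤ C λ'`. -/
theorem kernel_L1_bound (c : ℝ) (hc : 1 < c)
    (φ0 : ℝ → ℝ) (hφ0_smooth : ContDiff ℝ (⊤ : ℕ∞) φ0)
    (hφ0_bdd : ∃ M : ℝ, ∀ ω : ℝ, |φ0 ω| ≤ M)
    (hφ0_one : ∀ ω : ℝ, |ω| ≤ 1 → φ0 ω = 1)
    (hφ0_zero : ∀ ω : ℝ, c ≤ |ω| → φ0 ω = 0) :
    ∃ C : ℝ, ∀ lam lam' : ℝ, c < lam' → lam' < lam →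
      (∫ t : ℝ, ‖invFT (fun ω : ℝ => ((hhat0 lam lam' ω * φ0 (ω / π) : ℝ) : ℂ)) t‖)
        ≤ C * lam' := by
  obtain ⟨A, B, M, hA, hB, hAB⟩ := exists_AB
  have hφs : HasCompactSupport φ0 := by
    apply HasCompactSupport.intro (K := Set.Icc (-c) c) isCompact_Icc
    intro x hx
    apply hφ0_zero
    by_contra h
    push Not at h
    exact hx ⟨(abs_lt.1 h).1.le, (abs_lt.1 h).2.le⟩
  obtain ⟨N, hN⟩ := Bd2.of_compact hφ0_smooth hφs
  have hπ := Real.pi_gt_three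
  have hπ4 := Real.pi_le_four
  have hP := hN.scale (a := π⁻¹) (by
    rw [abs_of_pos (by positivity)]
    exact inv_le_one_of_one_le₀ (by linarith))
  set K := 4 * (4 * (M * M) * N) with hK
  refine ⟨(4 * (π * c) * K) * π, fun lam lam' h1 h2 => ?_⟩
  have hl' : 0 < lam' := by linarith
  have hl : 0 < lam := by linarith
  have hsc : ∀ l : ℝ, c < l → |(2 * l)⁻¹| ≤ 1 := by
    intro l hl
    rw [abs_of_pos (by have : 0 < l := by linarith
                       positivity)]
    exact inv_le_one_of_one_le₀ (by linarith)
  have hF := ((hA.scale (hsc lam (by linarith))).mul (hB.scale (hsc lam' h1))).mul hP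
  have hz : ∀ x : ℝ, π * c ≤ |x| → φ0 (π⁻¹ * x) = 0 := by
    intro x hx
    apply hφ0_zero
    rw [abs_mul, abs_of_pos (by positivity : 0 < π⁻¹)]
    rw [inv_mul_eq_div, le_div_iff₀ (by positivity)]
    linarith
  have heq : (fun ω : ℝ => ((hhat0 lam lam' ω * φ0 (ω / π) : ℝ) : ℂ)) =
      fun ω : ℝ => ((A ((2 * lam)⁻¹ * ω) * B ((2 * lam')⁻¹ * ω) * φ0 (π⁻¹ * ω) : ℝ) : ℂ) := by
    ext ω
    congr 1
    have e : ω / π = π⁻¹ * ω := by rw [inv_mul_eq_div]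
    rw [e]
    by_cases hω : π * c ≤ |ω|
    · rw [hz ω hω]; simp
    push Not at hω
    have hle : ∀ l : ℝ, c < l → |(2 * l)⁻¹ * ω| ≤ 2 := by
      intro l hl
      have hl0 : 0 < l := by linarith
      rw [abs_mul, abs_of_pos (by positivity), inv_mul_eq_div, div_le_iff₀ (by positivity)]
      nlinarith
    rw [(hAB _ (hle lam (by linarith))).1, (hAB _ (hle lam' h1)).2]
    congr 1
    unfold hhat0
    split_ifs with h0
    · subst h0; simp [sinc0_zero]
    · have hpos := sinc0_pos (x := (2 * lam')⁻¹ * ω) (by linarith [hle lam' h1])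
      have n1 : (2 * lam)⁻¹ * ω ≠ 0 := by positivity
      have n2 : (2 * lam')⁻¹ * ω ≠ 0 := by positivity
      rw [sinc0_of_ne n2] at hpos ⊢
      rw [sinc0_of_ne n1]
      have hsin : Real.sin ((2 * lam')⁻¹ * ω) ≠ 0 := by
        intro h; rw [h] at hpos; simp at hpos
      rw [div_eq_inv_mul ω (2 * lam), div_eq_inv_mul ω (2 * lam')]
      generalize Real.sin ((2 * lam')⁻¹ * ω) = s at *
      generalize Real.sin ((2 * lam)⁻¹ * ω) = r at *
      field_simp
  rw [heq]
  have hK0 : 0 ≤ K := (abs_nonneg _).trans (hF.2 0).1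
  refine (aux_L1 _ K (π * c) (by positivity) hF (fun x hx => by simp only [hz x hx, mul_zero])).trans ?_
  exact le_mul_of_one_le_right (by positivity) (by linarith)
end
end

section
/- Let ρ ≥ 1 and r ≥ 1 be integers. For every sequence (h_n)_{n∈ℤ} of real numbers, (S^r_ρ (Δ^r h))_n = (1/(2ρ+1))^r (Δ_ρ^r h)_n for all n ∈ ℤ. In particular, for r = 1, (S^1_ρ (Δ h))_n = (1/(2ρ+1)) (h_{n+ρ} − h_{n−ρ−1}). -/
noncomputable section
open Finset
open scoped BigOperators

/-- Partial-sum operator: `(S⁰_ρ h)_n = h_n`,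
`(S^r_ρ h)_n = (1/(2ρ+1)) ∑_{m=-ρ}^{ρ} (S^{r-1}_ρ h)_{n-m}`. -/
def Spow (ρ : ℕ) : ℕ → (ℤ → ℝ) → ℤ → ℝ
  | 0 => fun h => h
  | r + 1 => fun h n =>
      (1 / (2 * (ρ : ℝ) + 1)) * ∑ m ∈ Finset.Icc (-(ρ : ℤ)) (ρ : ℤ), Spow ρ r h (n - m)

/-- Backward difference `(Δ h)_n = h_n - h_{n-1}`. -/
def Del (h : ℤ → ℝ) : ℤ → ℝ := fun n => h n - h (n - 1)

/-- `(Δ_p x)_n = x_{n+p} - x_{n-p-1}`. -/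
def DelP (p : ℕ) (x : ℤ → ℝ) : ℤ → ℝ := fun n => x (n + (p : ℤ)) - x (n - (p : ℤ) - 1)

theorem sum_Del_aux (g : ℤ → ℝ) (n : ℤ) (ρ : ℕ) :
    ∑ m ∈ Finset.Icc (-(ρ : ℤ)) (ρ : ℤ), Del g (n - m) = DelP ρ g n := by
  induction ρ with
  | zero => simp [Del, DelP]
  | succ k ih =>
    have e : Finset.Icc (-((k + 1 : ℕ) : ℤ)) ((k + 1 : ℕ) : ℤ)
        = insert (-((k : ℤ) + 1)) (insert ((k : ℤ) + 1) (Finset.Icc (-(k : ℤ)) (k : ℤ))) := by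
      ext x
      simp only [Finset.mem_Icc, Finset.mem_insert]
      push_cast
      omega
    rw [e, Finset.sum_insert, Finset.sum_insert, ih]
    · simp only [Del, DelP]
      push_cast
      rw [show n - -((k : ℤ) + 1) = n + (k + 1) by ring,
        show n + ((k : ℤ) + 1) - 1 = n + k by ring,
        show n - ((k : ℤ) + 1) = n - k - 1 by ring]
      ring
    · simp
    · simp only [Finset.mem_Icc, Finset.mem_insert]
      omega

theorem DelP_Del_comm (ρ : ℕ) : Function.Commute (DelP ρ) Del := by
  intro h
  funext n
  simp only [Del, DelP]
  rw [show n + (ρ : ℤ) - 1 = n - 1 + ρ by ring,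
    show n - (ρ : ℤ) - 1 - 1 = n - 1 - ρ - 1 by ring]
  ring

theorem Spow_Del_aux (ρ r : ℕ) (h : ℤ → ℝ) (n : ℤ) :
    Spow ρ r (Del^[r] h) n = (1 / (2 * (ρ : ℝ) + 1)) ^ r * (DelP ρ)^[r] h n := by
  induction r generalizing h n with
  | zero => simp [Spow]
  | succ r ih =>
    simp only [Spow]
    rw [Function.iterate_succ_apply]
    simp only [ih]
    rw [← Finset.mul_sum, ((DelP_Del_comm ρ).iterate_left r) h, sum_Del_aux,
      Function.iterate_succ_apply' (DelP ρ), pow_succ]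
    ring

/-- `S^r_ρ ∘ Δ^r = (1/(2ρ+1))^r Δ_ρ^r`; in particular for `r = 1`,
`(S^1_ρ (Δ h))_n = (1/(2ρ+1)) (h_{n+ρ} - h_{n-ρ-1})`. -/
theorem partial_sum_of_difference (ρ r : ℕ) (hρ : 1 ≤ ρ) (hr : 1 ≤ r) (h : ℤ → ℝ) :
    (∀ n : ℤ, Spow ρ r (Del^[r] h) n = (1 / (2 * (ρ : ℝ) + 1)) ^ r * (DelP ρ)^[r] h n) ∧
    (∀ n : ℤ, Spow ρ 1 (Del h) n
        = (1 / (2 * (ρ : ℝ) + 1)) * (h (n + (ρ : ℤ)) - h (n - (ρ : ℤ) - 1))) := by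
  refine ⟨fun n => Spow_Del_aux ρ r h n, fun n => ?_⟩
  have := Spow_Del_aux ρ 1 h n
  simpa only [Function.iterate_one, pow_one, DelP] using this
end
end

section
/- Let λ > λ' > 1 and let ĥ_0(ω) := λ sin(ω/(2λ)) / (λ' sin(ω/(2λ'))) for ω not a nonzero multiple of 2πλ', with ĥ_0(0) := 1. Then the derivative ĥ_0'(ω) = (λ' sin(ω/(2λ')) cos(ω/(2λ)) − λ sin(ω/(2λ)) cos(ω/(2λ'))) / (2 λ'² sin²(ω/(2λ'))) satisfies |ĥ_0'(ω)| ≤ 1/2 for all ω with |ω| ≤ λ'π; in particular |ĥ_0'(±λ'π)| = cos(λ'π/(2λ))/(2λ') ≤ 1/2. -/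
noncomputable section
open scoped Real

theorem hhat0_aux_bound (l l' a b : ℝ) (h1 : 1 < l') (ha : 0 < a) (hab : a ≤ b) (hb : b ≤ Real.pi / 2)
    (h : l * a = l' * b) (hl : 0 < l) :
    |(l' * Real.sin b * Real.cos a - l * Real.sin a * Real.cos b) / (2 * l' ^ 2 * Real.sin b ^ 2)| ≤ 1 / 2 := by
  have hpi := Real.pi_pos
  have hb0 : 0 < b := by linarith
  have hsb : 0 < Real.sin b := Real.sin_pos_of_pos_of_lt_pi hb0 (by linarith)
  have hcb : 0 ≤ Real.cos b := Real.cos_nonneg_of_neg_pi_div_two_le_of_le (by linarith) hb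
  have hca : 0 ≤ Real.cos a := Real.cos_nonneg_of_neg_pi_div_two_le_of_le (by linarith) (by linarith)
  have key : ∀ x : ℝ, 0 < x → x ≤ Real.pi / 2 → x * Real.cos x ≤ Real.sin x := by
    intro x hx hx2
    rcases hx2.lt_or_eq with hlt | heq
    · have hc : 0 < Real.cos x := Real.cos_pos_of_mem_Ioo ⟨by linarith, hlt⟩
      have := Real.lt_tan hx hlt
      rw [Real.tan_eq_sin_div_cos, lt_div_iff₀ hc] at this
      exact this.le
    · rw [heq]; simp
  have ka := key a ha (by linarith)
  have kb := key b hb0 hb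
  have sa : Real.sin a ≤ a := Real.sin_le ha.le
  have sb : Real.sin b ≤ b := Real.sin_le hb0.le
  have cab : Real.cos b ≤ Real.cos a := Real.cos_le_cos_of_nonneg_of_le_pi ha.le (by linarith) hab
  have ca1 := Real.cos_le_one a
  have hs1 := Real.sin_le_one b
  have hc1 := Real.cos_le_one b
  have sc : 1 ≤ Real.sin b + Real.cos b := by
    nlinarith [Real.sin_sq_add_cos_sq b]
  have hl' : 0 < l' := by linarith
  have hbig : l' * Real.sin b ^ 2 ≤ l' ^ 2 * Real.sin b ^ 2 := by
    apply mul_le_mul_of_nonneg_right _ (sq_nonneg _)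
    nlinarith
  rw [abs_div, abs_of_pos (a := 2 * l' ^ 2 * Real.sin b ^ 2) (by positivity), div_le_iff₀ (by positivity)]
  have hA : l' * b * Real.cos a * Real.cos b ≤ l * Real.sin a * Real.cos b := by
    rw [← h]
    have := mul_le_mul_of_nonneg_left ka (mul_nonneg hl.le hcb)
    linarith
  have hB : l * Real.sin a * Real.cos b ≤ l' * b * Real.cos b := by
    rw [← h]
    have := mul_le_mul_of_nonneg_left sa (mul_nonneg hl.le hcb)
    linarith
  have e1 : Real.cos a * (Real.sin b - b * Real.cos b) ≤ Real.sin b ^ 2 := by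
    have t1 : Real.cos a * (Real.sin b - b * Real.cos b) ≤ 1 * (Real.sin b - b * Real.cos b) :=
      mul_le_mul_of_nonneg_right ca1 (by linarith)
    have t2 : Real.sin b * Real.cos b ≤ b * Real.cos b := mul_le_mul_of_nonneg_right sb hcb
    nlinarith
  have e2 : b * Real.cos b - Real.sin b * Real.cos a ≤ Real.sin b ^ 2 := by
    nlinarith
  have e1' := mul_le_mul_of_nonneg_left e1 hl'.le
  have e2' := mul_le_mul_of_nonneg_left e2 hl'.le
  rw [abs_le]
  constructor <;> linarith

theorem hhat0_aux_deriv (lam lam' ω : ℝ) (h1 : 0 < lam') (h2 : 0 < lam) (h0 : 0 < ω)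
    (h : ω ≤ lam' * Real.pi) :
    deriv (hhat0 lam lam') ω =
        (lam' * Real.sin (ω / (2 * lam')) * Real.cos (ω / (2 * lam))
            - lam * Real.sin (ω / (2 * lam)) * Real.cos (ω / (2 * lam')))
          / (2 * lam' ^ 2 * Real.sin (ω / (2 * lam')) ^ 2) := by
  have hpi := Real.pi_pos
  have hs : 0 < Real.sin (ω / (2 * lam')) := by
    apply Real.sin_pos_of_pos_of_lt_pi (by positivity)
    rw [div_lt_iff₀ (by positivity)]
    nlinarith
  have hev : hhat0 lam lam' =ᶠ[nhds ω] fun x =>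
      (lam * Real.sin (x / (2 * lam))) / (lam' * Real.sin (x / (2 * lam'))) := by
    filter_upwards [isOpen_ne.mem_nhds h0.ne'] with x hx
    exact if_neg hx
  rw [hev.deriv_eq]
  have d : ∀ l : ℝ, HasDerivAt (fun x => l * Real.sin (x / (2 * l)))
      (l * (Real.cos (ω / (2 * l)) * (1 / (2 * l)))) ω := fun l =>
    (((hasDerivAt_id ω).div_const (2 * l)).sin).const_mul l
  have := ((d lam).div (d lam') (by positivity)).deriv
  refine this.trans ?_
  generalize Real.sin (ω / (2 * lam')) = s at *
  field_simp

theorem hhat0_aux_odd (lam lam' ω : ℝ) :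
    deriv (hhat0 lam lam') (-ω) = - deriv (hhat0 lam lam') ω := by
  have : (fun x => hhat0 lam lam' (-x)) = hhat0 lam lam' := by
    funext x
    simp [hhat0, neg_div, div_neg]
  have h := deriv_comp_neg (hhat0 lam lam') ω
  rw [this] at h
  linarith

/-- for `λ > λ' > 1` the derivative of `ĥ₀` is given (away from `ω = 0`)
by the formula
`(λ' sin(ω/(2λ')) cos(ω/(2λ)) − λ sin(ω/(2λ)) cos(ω/(2λ'))) / (2 λ'² sin²(ω/(2λ')))`
and satisfies `|ĥ₀'(ω)| ≤ 1/2` for `|ω| ≤ λ'π`; in particular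
`|ĥ₀'(±λ'π)| = cos(λ'π/(2λ))/(2λ') ≤ 1/2`. -/
theorem hhat0_deriv_bound (lam lam' : ℝ) (h1 : 1 < lam') (h2 : lam' < lam) :
    (∀ ω : ℝ, 0 < |ω| → |ω| ≤ lam' * π →
      deriv (hhat0 lam lam') ω =
        (lam' * Real.sin (ω / (2 * lam')) * Real.cos (ω / (2 * lam))
            - lam * Real.sin (ω / (2 * lam)) * Real.cos (ω / (2 * lam')))
          / (2 * lam' ^ 2 * Real.sin (ω / (2 * lam')) ^ 2)) ∧
    (∀ ω : ℝ, |ω| ≤ lam' * π → |deriv (hhat0 lam lam') ω| ≤ 1 / 2) ∧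
    |deriv (hhat0 lam lam') (lam' * π)| = Real.cos (lam' * π / (2 * lam)) / (2 * lam') ∧
    |deriv (hhat0 lam lam') (-(lam' * π))| = Real.cos (lam' * π / (2 * lam)) / (2 * lam') ∧
    Real.cos (lam' * π / (2 * lam)) / (2 * lam') ≤ 1 / 2 := by
  have hpi := Real.pi_pos
  have p1 : 0 < lam' := by linarith
  have p2 : 0 < lam := by linarith
  have hD := fun ω => hhat0_aux_deriv lam lam' ω p1 p2
  have hB : ∀ ω : ℝ, 0 < ω → ω ≤ lam' * π → |deriv (hhat0 lam lam') ω| ≤ 1 / 2 := by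
    intro ω h0 h
    rw [hD ω h0 h]
    apply hhat0_aux_bound _ _ _ _ h1 (by positivity) _ _ _ p2
    · gcongr
    · rw [div_le_iff₀ (by positivity)]
      linarith
    · field_simp
  have hE : |deriv (hhat0 lam lam') (lam' * π)| = Real.cos (lam' * π / (2 * lam)) / (2 * lam') := by
    rw [hD _ (by positivity) le_rfl]
    have e : lam' * π / (2 * lam') = π / 2 := by field_simp
    have hc : 0 ≤ Real.cos (lam' * π / (2 * lam)) := by
      apply Real.cos_nonneg_of_neg_pi_div_two_le_of_le
      · have : 0 < lam' * π / (2 * lam) := by positivity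
        linarith
      · rw [div_le_iff₀ (by positivity)]
        nlinarith
    rw [e, Real.sin_pi_div_two, Real.cos_pi_div_two]
    rw [abs_of_nonneg (by simp only [mul_zero, sub_zero]; positivity)]
    field_simp
    ring
  refine ⟨?_, ?_, hE, ?_, ?_⟩
  · intro ω h0 h
    rcases lt_or_gt_of_ne (abs_pos.mp h0) with hn | hp
    · have := hD (-ω) (by linarith) (by rwa [abs_of_neg hn] at h)
      rw [hhat0_aux_odd] at this
      simp only [neg_div, Real.sin_neg, Real.cos_neg] at this
      rw [← neg_neg (deriv _ _), this, ← neg_div]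
      congr 1
      · ring
      · ring
    · exact hD ω hp (by rwa [abs_of_pos hp] at h)
  · intro ω h
    rcases lt_trichotomy ω 0 with hn | rfl | hp
    · have := hB (-ω) (by linarith) (by rwa [abs_of_neg hn] at h)
      rwa [hhat0_aux_odd, abs_neg] at this
    · have := hhat0_aux_odd lam lam' 0
      rw [neg_zero] at this
      have h0 : deriv (hhat0 lam lam') 0 = 0 := by linarith
      rw [h0]; norm_num
    · exact hB ω hp (by rwa [abs_of_pos hp] at h)
  · rw [hhat0_aux_odd, abs_neg, hE]
  · rw [← hE]
    exact hB _ (by positivity) le_rfl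
end
end

section
/- Let λ > λ' > 1 and let ĥ_0(ω) := λ sin(ω/(2λ)) / (λ' sin(ω/(2λ'))) for ω not a nonzero multiple of 2πλ', with ĥ_0(0) := 1. Then the second derivative satisfies |ĥ_0''(ω)| ≤ π/8 for all ω with |ω| ≤ λ'π; in particular |ĥ_0''(±λ'π)| = sin(πλ'/(2λ)) (λ² − λ'²) / (4 λ λ'³), and sin(πλ'/(2λ)) (λ² − λ'²) / (4 λ λ'³) ≤ π/8. -/
noncomputable section
open scoped Real

def hhP (a b ω : ℝ) : ℝ :=
  a * Real.cos (a * ω) * Real.sin (b * ω) - b * Real.sin (a * ω) * Real.cos (b * ω)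

def hhQ (a b ω : ℝ) : ℝ :=
  (b ^ 2 - a ^ 2) * Real.sin (a * ω) * Real.sin (b * ω) ^ 2 - 2 * b * Real.cos (b * ω) * hhP a b ω

def hhD (a b ω : ℝ) : ℝ := b / a * (hhQ a b ω / Real.sin (b * ω) ^ 3)

lemma hh_sin (a ω : ℝ) :
    HasDerivAt (fun x => Real.sin (a * x)) (a * Real.cos (a * ω)) ω := by
  have := ((hasDerivAt_id ω).const_mul a).sin
  simpa [mul_comm] using this

lemma hh_cos (a ω : ℝ) :
    HasDerivAt (fun x => Real.cos (a * x)) (-(a * Real.sin (a * ω))) ω := by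
  have := ((hasDerivAt_id ω).const_mul a).cos
  simpa [mul_comm] using this

lemma hhP_deriv (a b ω : ℝ) : HasDerivAt (hhP a b)
    ((b ^ 2 - a ^ 2) * Real.sin (a * ω) * Real.sin (b * ω)) ω := by
  have := (((hh_cos a ω).const_mul a).mul (hh_sin b ω)).sub
    (((hh_sin a ω).const_mul b).mul (hh_cos b ω))
  refine HasDerivAt.congr_deriv (f := hhP a b) this ?_
  ring

lemma hhQ_deriv (a b ω : ℝ) : HasDerivAt (hhQ a b)
    ((b ^ 2 - a ^ 2) * a * Real.cos (a * ω) * Real.sin (b * ω) ^ 2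
      + 2 * b ^ 2 * Real.sin (b * ω) * hhP a b ω) ω := by
  have := (((hh_sin a ω).const_mul (b ^ 2 - a ^ 2)).mul ((hh_sin b ω).pow 2)).sub
    (((hh_cos b ω).const_mul (2 * b)).mul (hhP_deriv a b ω))
  refine HasDerivAt.congr_deriv (f := hhQ a b) this ?_
  simp
  ring

lemma hh_first (a b ω : ℝ) (ha : a ≠ 0) (hs : Real.sin (b * ω) ≠ 0) :
    HasDerivAt (fun x => b / a * (Real.sin (a * x) / Real.sin (b * x)))
      (b / a * (hhP a b ω / Real.sin (b * ω) ^ 2)) ω := by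
  have := ((hh_sin a ω).div (hh_sin b ω) hs).const_mul (b / a)
  refine HasDerivAt.congr_deriv this ?_
  unfold hhP
  ring

lemma hh_second (a b ω : ℝ) (ha : a ≠ 0) (hs : Real.sin (b * ω) ≠ 0) :
    HasDerivAt (fun x => b / a * (hhP a b x / Real.sin (b * x) ^ 2)) (hhD a b ω) ω := by
  have := ((hhP_deriv a b ω).div ((hh_sin b ω).pow 2) (pow_ne_zero 2 hs)).const_mul (b / a)
  refine HasDerivAt.congr_deriv this ?_
  unfold hhD hhQ
  simp
  left
  field_simp

lemma hhP_nonneg (a b ω : ℝ) (ha : 0 < a) (hab : a < b) (h0 : 0 ≤ ω) (h1 : b * ω ≤ π / 2) :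
    0 ≤ hhP a b ω := by
  have hb : 0 < b := ha.trans hab
  have hm : MonotoneOn (hhP a b) (Set.Icc 0 ω) := by
    apply monotoneOn_of_deriv_nonneg (convex_Icc 0 ω)
    · exact fun x _ => (hhP_deriv a b x).continuousAt.continuousWithinAt
    · exact fun x _ => (hhP_deriv a b x).differentiableAt.differentiableWithinAt
    · intro x hx
      rw [interior_Icc] at hx
      rw [(hhP_deriv a b x).deriv]
      have hbx : b * x ≤ π := by nlinarith [hx.2, Real.pi_pos]
      have hax : a * x ≤ π := by nlinarith [hx.1]
      have e1 := Real.sin_nonneg_of_nonneg_of_le_pi (mul_nonneg ha.le hx.1.le) hax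
      have e2 := Real.sin_nonneg_of_nonneg_of_le_pi (mul_nonneg hb.le hx.1.le) hbx
      have e3 : 0 ≤ b ^ 2 - a ^ 2 := by nlinarith
      positivity
  have := hm ⟨le_rfl, h0⟩ ⟨h0, le_rfl⟩ h0
  simpa [hhP] using this

lemma hhQ_nonneg (a b ω : ℝ) (ha : 0 < a) (hab : a < b) (h0 : 0 ≤ ω) (h1 : b * ω ≤ π / 2) :
    0 ≤ hhQ a b ω := by
  have hb : 0 < b := ha.trans hab
  have hm : MonotoneOn (hhQ a b) (Set.Icc 0 ω) := by
    apply monotoneOn_of_deriv_nonneg (convex_Icc 0 ω)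
    · exact fun x _ => (hhQ_deriv a b x).continuousAt.continuousWithinAt
    · exact fun x _ => (hhQ_deriv a b x).differentiableAt.differentiableWithinAt
    · intro x hx
      rw [interior_Icc] at hx
      rw [(hhQ_deriv a b x).deriv]
      have hbx : b * x ≤ π / 2 := by nlinarith [hx.2, Real.pi_pos]
      have hax : a * x ≤ π / 2 := by nlinarith [hx.1]
      have hx0 : 0 ≤ a * x := mul_nonneg ha.le hx.1.le
      have e1 : 0 ≤ Real.cos (a * x) :=
        Real.cos_nonneg_of_neg_pi_div_two_le_of_le (by linarith [Real.pi_pos]) hax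
      have e2 := Real.sin_nonneg_of_nonneg_of_le_pi (mul_nonneg hb.le hx.1.le)
        (by linarith [Real.pi_pos])
      have e3 : 0 ≤ b ^ 2 - a ^ 2 := by nlinarith
      have e4 := hhP_nonneg a b x ha hab hx.1.le hbx
      positivity
  have := hm ⟨le_rfl, h0⟩ ⟨h0, le_rfl⟩ h0
  simpa [hhQ, hhP] using this

lemma hhD_bound_pos (a b ω : ℝ) (ha : 0 < a) (hab : a < b) (hb2 : b < 1 / 2)
    (h0 : 0 < ω) (h1 : b * ω ≤ π / 2) : |hhD a b ω| ≤ π / 8 := by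
  have hb : 0 < b := ha.trans hab
  have hP := hhP_nonneg a b ω ha hab h0.le h1
  have hQ := hhQ_nonneg a b ω ha hab h0.le h1
  have hbω : 0 < b * ω := mul_pos hb h0
  have hpi := Real.pi_pos
  have hS : 0 < Real.sin (b * ω) := Real.sin_pos_of_pos_of_lt_pi hbω (by linarith)
  have hC : 0 ≤ Real.cos (b * ω) :=
    Real.cos_nonneg_of_neg_pi_div_two_le_of_le (by linarith) h1
  have hJ : 2 / π * (b * ω) ≤ Real.sin (b * ω) := Real.mul_le_sin hbω.le h1
  have hA : Real.sin (a * ω) ≤ a * ω := Real.sin_le (by positivity)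
  have e3 : 0 ≤ b ^ 2 - a ^ 2 := by nlinarith
  have hD0 : 0 ≤ hhD a b ω := by unfold hhD; positivity
  rw [abs_of_nonneg hD0]
  have hr : Real.sin (a * ω) / Real.sin (b * ω) ≤ a * π / (2 * b) := by
    rw [div_le_iff₀ hS]
    calc Real.sin (a * ω) ≤ a * ω := hA
      _ = a * π / (2 * b) * (2 / π * (b * ω)) := by field_simp
      _ ≤ _ := by gcongr
  have hq : hhQ a b ω ≤ (b ^ 2 - a ^ 2) * Real.sin (a * ω) * Real.sin (b * ω) ^ 2 := by
    have : 0 ≤ 2 * b * Real.cos (b * ω) * hhP a b ω := by positivity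
    unfold hhQ; linarith
  calc hhD a b ω ≤ b / a * ((b ^ 2 - a ^ 2) * Real.sin (a * ω) * Real.sin (b * ω) ^ 2
        / Real.sin (b * ω) ^ 3) := by unfold hhD; gcongr
    _ = b / a * (b ^ 2 - a ^ 2) * (Real.sin (a * ω) / Real.sin (b * ω)) := by field_simp
    _ ≤ b / a * (b ^ 2 - a ^ 2) * (a * π / (2 * b)) := by gcongr
    _ = (b ^ 2 - a ^ 2) * (π / 2) := by field_simp
    _ ≤ 1 / 4 * (π / 2) := by gcongr; nlinarith
    _ = π / 8 := by ring

lemma hhD_neg (a b ω : ℝ) : hhD a b (-ω) = hhD a b ω := by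
  simp only [hhD, hhQ, hhP, mul_neg, Real.sin_neg, Real.cos_neg]
  rw [Odd.neg_pow (by decide : Odd 3), div_neg]
  ring

lemma hhD_bound (a b ω : ℝ) (ha : 0 < a) (hab : a < b) (hb2 : b < 1 / 2)
    (h0 : ω ≠ 0) (h1 : b * |ω| ≤ π / 2) : |hhD a b ω| ≤ π / 8 := by
  have : hhD a b ω = hhD a b |ω| := by
    rcases abs_choice ω with h | h <;> rw [h]
    rw [hhD_neg]
  rw [this]
  exact hhD_bound_pos a b _ ha hab hb2 (abs_pos.2 h0) h1

lemma hh_deriv_bound_zero (F : ℝ → ℝ) (ε C : ℝ) (hε : 0 < ε) (hC : 0 ≤ C)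
    (hF : ∀ x, 0 < x → x ≤ ε → DifferentiableAt ℝ F x ∧ |deriv F x| ≤ C) :
    |deriv F 0| ≤ C := by
  by_cases hd : DifferentiableAt ℝ F 0
  · have ht := (hasDerivWithinAt_iff_tendsto_slope' (s := Set.Ioi 0) (by simp)).1
      (hd.hasDerivAt.hasDerivWithinAt)
    refine le_of_tendsto ht.abs ?_
    filter_upwards [Ioc_mem_nhdsGT hε] with y hy
    obtain ⟨c, hc, he⟩ := exists_deriv_eq_slope F hy.1
      (fun x hx => by
        rcases hx.1.eq_or_lt with h | h
        · rw [← h]; exact hd.continuousAt.continuousWithinAt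
        · exact (hF x h (hx.2.trans hy.2)).1.continuousAt.continuousWithinAt)
      (fun x hx => (hF x hx.1 (hx.2.le.trans hy.2)).1.differentiableWithinAt)
    rw [slope_def_field, ← he]
    exact (hF c hc.1 (hc.2.le.trans hy.2)).2
  · rw [deriv_zero_of_not_differentiableAt hd]; simpa using hC

lemma hh_sin_ne (b ω : ℝ) (hb : 0 < b) (h0 : ω ≠ 0) (h1 : b * |ω| ≤ π / 2) :
    Real.sin (b * ω) ≠ 0 := by
  have : 0 < b * |ω| := mul_pos hb (abs_pos.2 h0)
  have hs : 0 < Real.sin (b * |ω|) :=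
    Real.sin_pos_of_pos_of_lt_pi this (by linarith [Real.pi_pos])
  rcases abs_choice ω with h | h <;> rw [h] at hs
  · exact hs.ne'
  · rw [mul_neg, Real.sin_neg] at hs
    intro h; rw [h] at hs; simp at hs

lemma hh_main (lam lam' ω : ℝ) (h1 : 0 < lam') (h2 : lam' < lam) (h0 : ω ≠ 0)
    (hw : 1 / (2 * lam') * |ω| ≤ π / 2) :
    HasDerivAt (deriv (hhat0 lam lam')) (hhD (1 / (2 * lam)) (1 / (2 * lam')) ω) ω := by
  have hl : 0 < lam := h1.trans h2
  have hs := hh_sin_ne _ ω (by positivity) h0 hw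
  have ha : 1 / (2 * lam) ≠ 0 := by positivity
  have key : ∀ x, x ≠ 0 → hhat0 lam lam' x = (1 / (2 * lam')) / (1 / (2 * lam)) *
      (Real.sin (1 / (2 * lam) * x) / Real.sin (1 / (2 * lam') * x)) := by
    intro x hx
    rw [hhat0, if_neg hx, mul_div_mul_comm]
    congr 1
    · field_simp
    · congr 2 <;> ring
  have hcont : ContinuousAt (fun x => Real.sin (1 / (2 * lam') * x)) ω := by fun_prop
  refine (hh_second _ _ ω ha hs).congr_of_eventuallyEq ?_
  filter_upwards [isOpen_ne.mem_nhds h0, hcont.eventually_ne hs] with y hy hys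
  refine ((hh_first _ _ y ha hys).congr_of_eventuallyEq ?_).deriv
  filter_upwards [isOpen_ne.mem_nhds hy] with z hz
  exact key z hz

/-- for `λ > λ' > 1` the second derivative of `ĥ₀` satisfies
`|ĥ₀''(ω)| ≤ π/8` for all `|ω| ≤ λ'π`; in particular
`|ĥ₀''(±λ'π)| = sin(πλ'/(2λ)) (λ² − λ'²) / (4 λ λ'³) ≤ π/8`. -/
theorem hhat0_second_deriv_bound (lam lam' : ℝ) (h1 : 1 < lam') (h2 : lam' < lam) :
    (∀ ω : ℝ, |ω| ≤ lam' * π → |deriv (deriv (hhat0 lam lam')) ω| ≤ π / 8) ∧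
    |deriv (deriv (hhat0 lam lam')) (lam' * π)|
      = Real.sin (π * lam' / (2 * lam)) * (lam ^ 2 - lam' ^ 2) / (4 * lam * lam' ^ 3) ∧
    |deriv (deriv (hhat0 lam lam')) (-(lam' * π))|
      = Real.sin (π * lam' / (2 * lam)) * (lam ^ 2 - lam' ^ 2) / (4 * lam * lam' ^ 3) ∧
    Real.sin (π * lam' / (2 * lam)) * (lam ^ 2 - lam' ^ 2) / (4 * lam * lam' ^ 3)
      ≤ π / 8 := by
  have hpi := Real.pi_pos
  have h0 : 0 < lam' := by linarith
  have hl : 0 < lam := by linarith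
  have ha : 0 < 1 / (2 * lam) := by positivity
  have hab : 1 / (2 * lam) < 1 / (2 * lam') := by gcongr
  have hb2 : 1 / (2 * lam') < 1 / 2 := by gcongr; linarith
  have hw : ∀ ω : ℝ, |ω| ≤ lam' * π → 1 / (2 * lam') * |ω| ≤ π / 2 := by
    intro ω h
    calc 1 / (2 * lam') * |ω| ≤ 1 / (2 * lam') * (lam' * π) := by gcongr
      _ = π / 2 := by field_simp
  have hall : ∀ ω : ℝ, |ω| ≤ lam' * π → |deriv (deriv (hhat0 lam lam')) ω| ≤ π / 8 := by
    intro ω hω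
    by_cases hz : ω = 0
    · subst hz
      refine hh_deriv_bound_zero _ (lam' * π) _ (by positivity) (by positivity) ?_
      intro x hx hx'
      have hx'' := hw x (by rwa [abs_of_pos hx])
      have hd := hh_main lam lam' x h0 h2 hx.ne' hx''
      refine ⟨hd.differentiableAt, ?_⟩
      rw [hd.deriv]
      exact hhD_bound _ _ _ ha hab hb2 hx.ne' hx''
    · rw [(hh_main lam lam' ω h0 h2 hz (hw ω hω)).deriv]
      exact hhD_bound _ _ _ ha hab hb2 hz (hw ω hω)
  have hp : 0 < lam' * π := by positivity
  have hval : hhD (1 / (2 * lam)) (1 / (2 * lam')) (lam' * π)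
      = Real.sin (π * lam' / (2 * lam)) * (lam ^ 2 - lam' ^ 2) / (4 * lam * lam' ^ 3) := by
    have e1 : 1 / (2 * lam') * (lam' * π) = π / 2 := by field_simp
    have e2 : 1 / (2 * lam) * (lam' * π) = π * lam' / (2 * lam) := by ring
    unfold hhD hhQ
    rw [e1, e2, Real.sin_pi_div_two, Real.cos_pi_div_two]
    field_simp
    ring
  have hnn : 0 ≤ Real.sin (π * lam' / (2 * lam)) * (lam ^ 2 - lam' ^ 2) / (4 * lam * lam' ^ 3) := by
    have : 0 ≤ Real.sin (π * lam' / (2 * lam)) := by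
      apply Real.sin_nonneg_of_nonneg_of_le_pi (by positivity)
      rw [div_le_iff₀ (by positivity)]
      nlinarith
    have h3 : 0 ≤ lam ^ 2 - lam' ^ 2 := by nlinarith
    positivity
  have hA : |deriv (deriv (hhat0 lam lam')) (lam' * π)|
      = Real.sin (π * lam' / (2 * lam)) * (lam ^ 2 - lam' ^ 2) / (4 * lam * lam' ^ 3) := by
    rw [(hh_main lam lam' _ h0 h2 hp.ne' (hw _ (abs_of_pos hp).le)).deriv, hval, abs_of_nonneg hnn]
  refine ⟨hall, hA, ?_, ?_⟩
  · rw [(hh_main lam lam' _ h0 h2 (neg_ne_zero.2 hp.ne')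
      (hw _ (by rw [abs_neg, abs_of_pos hp]))).deriv, hhD_neg, hval, abs_of_nonneg hnn]
  · rw [← hA]
    exact hall _ (abs_of_pos hp).le
end
end

section
/- Let λ' > 0 and let ĥ : [−λ'π, λ'π] → ℂ be twice continuously differentiable with ĥ(λ'π) = ĥ(−λ'π) = 0. Let C_{ĥ'} ≥ sup_{|ω| ≤ λ'π} |ĥ'(ω)| and C_{ĥ''} ≥ sup_{|ω| ≤ λ'π} |ĥ''(ω)|. Then (1/√(2π)) ∫_{−∞}^{∞} (1/(t²+1)) |∫_{−λ'π}^{λ'π} t² ĥ(ω) e^{iωt} dω| dt ≤ √(2π) (λ'π C_{ĥ''} + C_{ĥ'}). -/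
noncomputable section
open MeasureTheory
open scoped Real

/-- if `ĥ` is twice continuously differentiable on `[-λ'π, λ'π]` and
vanishes at the endpoints, with `|ĥ'| ≤ C_{ĥ'}` and `|ĥ''| ≤ C_{ĥ''}` on that interval,
then `(1/√(2π)) ∫_ℝ (1/(t²+1)) |∫_{-λ'π}^{λ'π} t² ĥ(ω) e^{iωt} dω| dt
  ≤ √(2π) (λ'π C_{ĥ''} + C_{ĥ'})`. -/
theorem weighted_integral_bound_high (lam' : ℝ) (hlam' : 0 < lam')
    (H H' H'' : ℝ → ℂ)
    (hd1 : ∀ ω ∈ Set.Icc (-(lam' * π)) (lam' * π),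
      HasDerivWithinAt H (H' ω) (Set.Icc (-(lam' * π)) (lam' * π)) ω)
    (hd2 : ∀ ω ∈ Set.Icc (-(lam' * π)) (lam' * π),
      HasDerivWithinAt H' (H'' ω) (Set.Icc (-(lam' * π)) (lam' * π)) ω)
    (hcont : ContinuousOn H'' (Set.Icc (-(lam' * π)) (lam' * π)))
    (hend1 : H (lam' * π) = 0) (hend2 : H (-(lam' * π)) = 0)
    (C1 C2 : ℝ)
    (hC1 : ∀ ω ∈ Set.Icc (-(lam' * π)) (lam' * π), ‖H' ω‖ ≤ C1)
    (hC2 : ∀ ω ∈ Set.Icc (-(lam' * π)) (lam' * π), ‖H'' ω‖ ≤ C2) :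
    (1 / Real.sqrt (2 * π)) *
        ∫ t : ℝ, (1 / (t ^ 2 + 1)) *
          ‖∫ ω in (-(lam' * π))..(lam' * π),
              ((t : ℂ) ^ 2) * H ω * Complex.exp (Complex.I * ω * t)‖
      ≤ Real.sqrt (2 * π) * (lam' * π * C2 + C1) := by
  have hl : 0 < lam' * π := mul_pos hlam' Real.pi_pos
  generalize lam' * π = L at *
  have hab : -L ≤ L := by linarith
  have hcH : ContinuousOn H (Set.Icc (-L) L) := fun x hx => (hd1 x hx).continuousWithinAt
  have hcH' : ContinuousOn H' (Set.Icc (-L) L) := fun x hx => (hd2 x hx).continuousWithinAt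
  have hnorm : ∀ t ω : ℝ, ‖Complex.exp (Complex.I * ω * t)‖ = 1 := by
    intro t ω
    have : Complex.I * ω * t = ((ω * t : ℝ) : ℂ) * Complex.I := by push_cast; ring
    rw [this, Complex.norm_exp_ofReal_mul_I]
  have key : ∀ t : ℝ, ‖∫ ω in (-L)..L,
      ((t : ℂ) ^ 2) * H ω * Complex.exp (Complex.I * ω * t)‖ ≤ 2 * (L * C2 + C1) := by
    intro t
    have hce : Continuous (fun ω : ℝ => Complex.exp (Complex.I * ω * t)) := by fun_prop
    have hde : ∀ x : ℝ, HasDerivAt (fun ω : ℝ => Complex.exp (Complex.I * ω * t))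
        (Complex.exp (Complex.I * x * t) * (Complex.I * t)) x := by
      intro x
      have h1 : HasDerivAt (fun ω : ℝ => Complex.I * (ω : ℂ) * t) (Complex.I * t) x := by
        simpa using ((Complex.ofRealCLM.hasDerivAt (x := x)).const_mul Complex.I).mul_const (t : ℂ)
      exact h1.cexp
    have hi1 : IntervalIntegrable (fun ω : ℝ => ((t : ℂ) ^ 2) * H ω * Complex.exp (Complex.I * ω * t))
        volume (-L) L := by
      apply ContinuousOn.intervalIntegrable
      rw [Set.uIcc_of_le hab]
      exact (continuousOn_const.mul hcH).mul hce.continuousOn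
    have hi2 : IntervalIntegrable (fun ω : ℝ => H'' ω * Complex.exp (Complex.I * ω * t))
        volume (-L) L := by
      apply ContinuousOn.intervalIntegrable
      rw [Set.uIcc_of_le hab]
      exact hcont.mul hce.continuousOn
    have ftc := intervalIntegral.integral_eq_sub_of_hasDerivAt_of_le hab
      (f := fun ω : ℝ => (H' ω - Complex.I * t * H ω) * Complex.exp (Complex.I * ω * t))
      (f' := fun ω : ℝ => H'' ω * Complex.exp (Complex.I * ω * t) +
        ((t : ℂ) ^ 2) * H ω * Complex.exp (Complex.I * ω * t))
      ((hcH'.sub (continuousOn_const.mul hcH)).mul hce.continuousOn)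
      (by
        intro x hx
        have hn := Icc_mem_nhds hx.1 hx.2
        have hx' := Set.Ioo_subset_Icc_self hx
        have h1 := (hd1 x hx').hasDerivAt hn
        have h2 := (hd2 x hx').hasDerivAt hn
        refine ((h2.sub (h1.const_mul (Complex.I * t))).mul (hde x)).congr_deriv ?_
        simp only [Pi.sub_apply]
        linear_combination -(t : ℂ) ^ 2 * H x * Complex.exp (Complex.I * x * t) * Complex.I_sq)
      (hi2.add hi1)
    rw [intervalIntegral.integral_add hi2 hi1] at ftc
    simp only [hend1, hend2, mul_zero, sub_zero] at ftc
    have b2 : ‖∫ ω in (-L)..L, H'' ω * Complex.exp (Complex.I * ω * t)‖ ≤ C2 * |L - -L| := by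
      apply intervalIntegral.norm_integral_le_of_norm_le_const
      intro x hx
      rw [Set.uIoc_of_le hab] at hx
      rw [norm_mul, hnorm, mul_one]
      exact hC2 x (Set.Ioc_subset_Icc_self hx)
    rw [abs_of_nonneg (by linarith)] at b2
    have e1 : ‖H' L * Complex.exp (Complex.I * (L : ℝ) * t)‖ ≤ C1 := by
      rw [norm_mul, hnorm, mul_one]; exact hC1 L ⟨hab, le_rfl⟩
    have e2 : ‖H' (-L) * Complex.exp (Complex.I * ((-L : ℝ) : ℂ) * t)‖ ≤ C1 := by
      rw [norm_mul, hnorm, mul_one]; exact hC1 (-L) ⟨le_rfl, hab⟩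
    rw [eq_sub_of_add_eq' ftc]
    refine (norm_sub_le _ _).trans ?_
    have := norm_sub_le (H' L * Complex.exp (Complex.I * (L : ℝ) * t))
      (H' (-L) * Complex.exp (Complex.I * ((-L : ℝ) : ℂ) * t))
    linarith
  have hint : Integrable (fun t : ℝ => (1 / (t ^ 2 + 1)) * (2 * (L * C2 + C1))) := by
    have := integrable_inv_one_add_sq.mul_const (2 * (L * C2 + C1))
    simpa [add_comm] using this
  have hle : ∫ t : ℝ, (1 / (t ^ 2 + 1)) *
          ‖∫ ω in (-L)..L, ((t : ℂ) ^ 2) * H ω * Complex.exp (Complex.I * ω * t)‖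
      ≤ π * (2 * (L * C2 + C1)) := by
    have hv : ∫ t : ℝ, (1 / (t ^ 2 + 1)) * (2 * (L * C2 + C1)) = π * (2 * (L * C2 + C1)) := by
      rw [integral_mul_const]
      congr 1
      rw [← integral_univ_inv_one_add_sq]
      simp [add_comm]
    rw [← hv]
    apply integral_mono_of_nonneg _ hint
    · exact Filter.Eventually.of_forall fun t => mul_le_mul_of_nonneg_left (key t) (by positivity)
    · exact Filter.Eventually.of_forall fun t => by positivity
  have hs : 0 < Real.sqrt (2 * π) := Real.sqrt_pos.2 (by positivity)
  have hss : Real.sqrt (2 * π) * Real.sqrt (2 * π) = 2 * π :=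
    Real.mul_self_sqrt (by positivity)
  rw [one_div, inv_mul_le_iff₀ hs, ← mul_assoc, hss]
  linarith
end
end
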